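/- arXiv:2301.03417 — 4 statements merged into one kernel-verified Lean document; each statement's English description precedes it below -/
import Mathlib

section
/- For every n ≥ 3, the oriented graph F⃗_n on 2n vertices described below satisfies: F⃗_n has exactly 4n arcs (so |A(F⃗_n)| = 2|V(F⃗_n)| and Mad(F⃗_n) = 4), and the 2-dicolouring assigning colour 1 to every u_i and colour 2 to every v_i is frozen; in particular F⃗_n is 2-freezable. Here F⃗_n is obtained from the disjoint union of two directed paths (u_1,…,u_n) and (v_1,…,v_n) by adding the arcs {u_i v_i : i ∈ [n]} ∪ {v_{i+1} u_i : i ∈ [n−1]} ∪ {v_1 u_2, u_n v_1, v_{n−1} u_n}. -/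
/-- A relation (digraph) is acyclic if no vertex lies on a directed cycle. -/
def RelAcyclic {V : Type} (r : V → V → Prop) : Prop :=
  ∀ v, ¬ Relation.TransGen r v v

/-- `α` is a `k`-dicolouring of the digraph `D`: each colour class induces
an acyclic subdigraph. -/
def IsDicolouring {V : Type} (D : V → V → Prop) (k : ℕ) (α : V → Fin k) : Prop :=
  ∀ c : Fin k, RelAcyclic (fun u v => D u v ∧ α u = c ∧ α v = c)

/-- Two colourings differ on exactly one vertex. -/
def RecolAdj {V : Type} {k : ℕ} (α β : V → Fin k) : Prop :=
  ∃ v, α v ≠ β v ∧ ∀ w, w ≠ v → α w = β w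

/-- A single edge of the `k`-dicolouring graph `D_k(D)`. -/
def RecolStep {V : Type} (D : V → V → Prop) (k : ℕ) (α β : V → Fin k) : Prop :=
  IsDicolouring D k α ∧ IsDicolouring D k β ∧ RecolAdj α β

/-- The digraph `D` is `k`-mixing: the `k`-dicolouring graph is connected. -/
def Mixing {V : Type} (D : V → V → Prop) (k : ℕ) : Prop :=
  ∀ α β : V → Fin k, IsDicolouring D k α → IsDicolouring D k β →
    Relation.ReflTransGen (RecolStep D k) α β

/-- Out-degree of `v` in the subdigraph of `D` induced by `S`. -/
noncomputable def outDegOn {V : Type} (D : V → V → Prop) (S : Set V) (v : V) : ℕ :=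
  {w ∈ S | D v w}.ncard

/-- In-degree of `v` in the subdigraph of `D` induced by `S`. -/
noncomputable def inDegOn {V : Type} (D : V → V → Prop) (S : Set V) (v : V) : ℕ :=
  {w ∈ S | D w v}.ncard

/-- An oriented graph: a digraph with no digon (hence also no loop). -/
def Oriented {V : Type} (D : V → V → Prop) : Prop :=
  ∀ u v, D u v → ¬ D v u

/-- A walk of length `m` in the `k`-dicolouring graph (a redicolouring sequence):
consecutive dicolourings differ on exactly one vertex. -/
def RecolWalk {V : Type} (D : V → V → Prop) (k m : ℕ) (γ : ℕ → V → Fin k) : Prop :=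
  (∀ i ≤ m, IsDicolouring D k (γ i)) ∧ ∀ i < m, RecolAdj (γ i) (γ (i + 1))

/-- A frozen `k`-dicolouring: no single vertex can be recoloured so as to
yield another `k`-dicolouring. -/
def FrozenDicolouring {V : Type} [DecidableEq V] (D : V → V → Prop) (k : ℕ)
    (α : V → Fin k) : Prop :=
  IsDicolouring D k α ∧
    ∀ (v : V) (c : Fin k), c ≠ α v → ¬ IsDicolouring D k (Function.update α v c)

/-- The arc set of a digraph, as a set of ordered pairs. -/
def arcSet {V : Type} (D : V → V → Prop) : Set (V × V) := {p | D p.1 p.2}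

/-- The arcs of `D` lying inside a set `S` of vertices. -/
def arcSetOn {V : Type} (D : V → V → Prop) (S : Set V) : Set (V × V) :=
  {p | p.1 ∈ S ∧ p.2 ∈ S ∧ D p.1 p.2}

/-- The oriented graph `F⃗_n` on `Fin n ⊕ Fin n` (with `Sum.inl i = u_{i+1}` and
`Sum.inr i = v_{i+1}`, `0`-indexed): the two directed paths `(u_1,…,u_n)`,
`(v_1,…,v_n)` together with the arcs `u_i v_i` (`i ∈ [n]`), `v_{i+1} u_i`
(`i ∈ [n-1]`), `v_1 u_2`, `u_n v_1` and `v_{n-1} u_n`. -/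
def Farc (n : ℕ) : (Fin n ⊕ Fin n) → (Fin n ⊕ Fin n) → Prop
  | Sum.inl i, Sum.inl j => j.val = i.val + 1
  | Sum.inr i, Sum.inr j => j.val = i.val + 1
  | Sum.inl i, Sum.inr j => i = j ∨ (i.val = n - 1 ∧ j.val = 0)
  | Sum.inr i, Sum.inl j =>
      i.val = j.val + 1 ∨ (i.val = 0 ∧ j.val = 1) ∨ (i.val = n - 2 ∧ j.val = n - 1)

/-! Charge every arc of `F⃗_n` to its tail, except `v_{n-1} v_n`, which is charged to its head.
Every vertex is then charged exactly two arcs, each incident with it. So `|A| = 2|V|`, and an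
induced subdigraph has at most twice as many arcs as vertices because its arcs are
charged inside it.

For frozenness, every `u_i` has an out-neighbour `v_a` and an in-neighbour `v_b` with `a ≤ b`, so
the directed path from `v_a` to `v_b` closes up to a directed cycle through `u_i`, which becomes
monochromatic when `u_i` is recoloured. The same holds with the two paths exchanged. -/

section Counting

variable {V : Type} {D : V → V → Prop} {owner : V × V → V}

/-- The arcs of `D` charged to the vertex `v`, where `owner` tells to which vertex a pair is
charged. -/
def chargedArcs (D : V → V → Prop) (owner : V × V → V) (v : V) : Set (V × V) :=
  {p ∈ arcSet D | owner p = v}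

theorem mem_chargedArcs {u v w : V} : (u, v) ∈ chargedArcs D owner w ↔ D u v ∧ owner (u, v) = w :=
  Iff.rfl

variable [Finite V] {m : ℕ}

theorem ncard_arcSet_eq_mul_card (h_charge : ∀ v, (chargedArcs D owner v).ncard = m) :
    (arcSet D).ncard = m * Nat.card V := by
  have h_union : arcSet D = ⋃ v, chargedArcs D owner v := by
    ext p
    simp [chargedArcs]
  have h_disjoint : Pairwise (Function.onFun Disjoint (chargedArcs D owner)) := fun _ _ hvw =>
    Set.disjoint_left.2 fun _ hpv hpw => hvw (hpv.2.symm.trans hpw.2)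
  have := Fintype.ofFinite V
  rw [h_union, Set.ncard_iUnion_of_finite (fun _ => Set.toFinite _) h_disjoint]
  simp [h_charge, finsum_eq_sum_of_fintype, mul_comm]

theorem ncard_arcSetOn_le_mul_ncard (h_end : ∀ p ∈ arcSet D, owner p = p.1 ∨ owner p = p.2)
    (h_charge : ∀ v, (chargedArcs D owner v).ncard ≤ m) (S : Set V) :
    (arcSetOn D S).ncard ≤ m * S.ncard := by
  classical
  have := Fintype.ofFinite V
  have h_cover : arcSetOn D S ⊆ ⋃ v ∈ S.toFinset, chargedArcs D owner v := by
    rintro p ⟨h_tail, h_head, h_arc⟩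
    have h_owner : owner p ∈ S := by rcases h_end p h_arc with h | h <;> rwa [h]
    exact Set.mem_biUnion (Set.mem_toFinset.2 h_owner) ⟨h_arc, rfl⟩
  calc (arcSetOn D S).ncard
      ≤ (⋃ v ∈ S.toFinset, chargedArcs D owner v).ncard := Set.ncard_le_ncard h_cover
    _ ≤ ∑ v ∈ S.toFinset, (chargedArcs D owner v).ncard := Finset.set_ncard_biUnion_le _ _
    _ ≤ S.toFinset.card • m := Finset.sum_le_card_nsmul _ _ _ fun v _ => h_charge v
    _ = m * S.ncard := by rw [smul_eq_mul, mul_comm, Set.ncard_eq_toFinset_card']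

end Counting

section Dicolouring

variable {V : Type}

theorem RelAcyclic.of_lt_of_rel {β : Type*} [Preorder β] {r : V → V → Prop} (f : V → β)
    (hf : ∀ a b, r a b → f a < f b) : RelAcyclic r := fun v hv =>
  lt_irrefl (f v) <| by simpa only [Relation.transGen_eq_self] using hv.lift f hf

variable {k : ℕ} {D : V → V → Prop} {α : V → Fin k} {c : Fin k}

/-- The subdigraph of `D` induced by the vertices of colour `c`, encoded as a relation on all of
`V`; `IsDicolouring D k α` says that each of these relations is acyclic. -/
def colourClass (D : V → V → Prop) (α : V → Fin k) (c : Fin k) (u v : V) : Prop :=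
  D u v ∧ α u = c ∧ α v = c

theorem not_isDicolouring_update [DecidableEq V] {v a b : V} (ha : α a = c) (hva : D v a)
    (hab : Relation.ReflTransGen (colourClass D α c) a b) (hbv : D b v) :
    ¬ IsDicolouring D k (Function.update α v c) := by
  have hv : Function.update α v c v = c := Function.update_self ..
  have update_eq {x : V} (hx : α x = c) : Function.update α v c x = c := by
    rcases eq_or_ne x v with rfl | hxv
    · exact hv
    · rwa [Function.update_of_ne hxv]
  have hb : α b = c := by
    rcases hab.cases_tail with rfl | ⟨_, _, h_last⟩
    exacts [ha, h_last.2.2]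
  have h_path : Relation.ReflTransGen (colourClass D (Function.update α v c) c) a b :=
    Relation.ReflTransGen.mono
      (fun _ _ h => ⟨h.1, update_eq h.2.1, update_eq h.2.2⟩) _ _ hab
  intro h_dicol
  exact h_dicol c v <| .head' ⟨hva, hv, update_eq ha⟩ (h_path.tail ⟨hbv, update_eq hb, hv⟩)

end Dicolouring

section Farc

variable {n : ℕ}

/-- The charging rule for `F⃗_n`: an arc is charged to its tail, except that the only arc between
two `v`'s that ends in `v_n` (the vertex `Sum.inr (n - 1)`) is charged to its head. -/
def arcOwner (n : ℕ) : (Fin n ⊕ Fin n) × (Fin n ⊕ Fin n) → Fin n ⊕ Fin n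
  | (Sum.inr i, Sum.inr j) => if j.val = n - 1 then Sum.inr j else Sum.inr i
  | (a, _) => a

theorem arcOwner_eq_or (p : (Fin n ⊕ Fin n) × (Fin n ⊕ Fin n)) :
    arcOwner n p = p.1 ∨ arcOwner n p = p.2 := by
  rcases p with ⟨_ | i, _ | j⟩ <;> grind [arcOwner]

theorem ncard_chargedArcs_farc_inl (hn : 2 ≤ n) (i : Fin n) :
    (chargedArcs (Farc n) (arcOwner n) (Sum.inl i)).ncard = 2 := by
  rcases lt_or_eq_of_le (Nat.succ_le_of_lt i.isLt) with hi | h_last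
  · have h_charged : chargedArcs (Farc n) (arcOwner n) (Sum.inl i) =
        {(Sum.inl i, Sum.inl ⟨i + 1, hi⟩), (Sum.inl i, Sum.inr i)} := by
      ext ⟨_ | _, _ | _⟩ <;> grind [mem_chargedArcs, Farc, arcOwner]
    rw [h_charged, Set.ncard_pair (by simp)]
  · have h_charged : chargedArcs (Farc n) (arcOwner n) (Sum.inl i) =
        {(Sum.inl i, Sum.inr i), (Sum.inl i, Sum.inr ⟨0, i.pos⟩)} := by
      ext ⟨_ | _, _ | _⟩ <;> grind [mem_chargedArcs, Farc, arcOwner]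
    rw [h_charged, Set.ncard_pair (by grind)]

theorem ncard_chargedArcs_farc_inr (hn : 3 ≤ n) (i : Fin n) :
    (chargedArcs (Farc n) (arcOwner n) (Sum.inr i)).ncard = 2 := by
  have h_cases : i.val = 0 ∨ (0 < i.val ∧ i.val < n - 2) ∨ i.val = n - 2 ∨ i.val = n - 1 := by
    omega
  rcases h_cases with h_first | ⟨h_pos, h_lt⟩ | h_penultimate | h_last
  · have h_charged : chargedArcs (Farc n) (arcOwner n) (Sum.inr i) =
        {(Sum.inr i, Sum.inr ⟨1, by omega⟩), (Sum.inr i, Sum.inl ⟨1, by omega⟩)} := by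
      ext ⟨_ | _, _ | _⟩ <;> grind [mem_chargedArcs, Farc, arcOwner]
    rw [h_charged, Set.ncard_pair (by simp)]
  · have h_charged : chargedArcs (Farc n) (arcOwner n) (Sum.inr i) =
        {(Sum.inr i, Sum.inr ⟨i + 1, by omega⟩), (Sum.inr i, Sum.inl ⟨i - 1, by omega⟩)} := by
      ext ⟨_ | _, _ | _⟩ <;> grind [mem_chargedArcs, Farc, arcOwner]
    rw [h_charged, Set.ncard_pair (by simp)]
  · have h_charged : chargedArcs (Farc n) (arcOwner n) (Sum.inr i) =
        {(Sum.inr i, Sum.inl ⟨i - 1, by omega⟩), (Sum.inr i, Sum.inl ⟨n - 1, by omega⟩)} := by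
      ext ⟨_ | _, _ | _⟩ <;> grind [mem_chargedArcs, Farc, arcOwner]
    rw [h_charged, Set.ncard_pair (by grind)]
  · have h_charged : chargedArcs (Farc n) (arcOwner n) (Sum.inr i) =
        {(Sum.inr ⟨n - 2, by omega⟩, Sum.inr i), (Sum.inr i, Sum.inl ⟨n - 2, by omega⟩)} := by
      ext ⟨_ | _, _ | _⟩ <;> grind [mem_chargedArcs, Farc, arcOwner]
    rw [h_charged, Set.ncard_pair (by simp)]

theorem ncard_chargedArcs_farc (hn : 3 ≤ n) (v : Fin n ⊕ Fin n) :
    (chargedArcs (Farc n) (arcOwner n) v).ncard = 2 := by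
  rcases v with i | i
  exacts [ncard_chargedArcs_farc_inl (by omega) i, ncard_chargedArcs_farc_inr hn i]

/-- The `2`-colouring of `F⃗_n` by its two paths; the paper's colours `1` and `2` are here `0`
and `1`. -/
def pathColouring (n : ℕ) : Fin n ⊕ Fin n → Fin 2 :=
  Sum.elim (fun _ => 0) (fun _ => 1)

theorem isDicolouring_pathColouring (n : ℕ) : IsDicolouring (Farc n) 2 (pathColouring n) := by
  refine fun c => RelAcyclic.of_lt_of_rel (Sum.elim id id) ?_
  rintro (i | i) (j | j) ⟨h_arc, hi, hj⟩
  · exact Fin.lt_def.2 (h_arc ▸ Nat.lt_succ_self _)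
  · exact absurd (hi.trans hj.symm) (by decide : (0 : Fin 2) ≠ 1)
  · exact absurd (hi.trans hj.symm) (by decide : (1 : Fin 2) ≠ 0)
  · exact Fin.lt_def.2 (h_arc ▸ Nat.lt_succ_self _)

theorem reflTransGen_colourClass_inl {a b : Fin n} (hab : a ≤ b) :
    Relation.ReflTransGen (colourClass (Farc n) (pathColouring n) 0) (Sum.inl a) (Sum.inl b) :=
  (le_iff_reflTransGen_covBy.1 hab).lift Sum.inl fun i j hij =>
    ⟨(by simpa using hij : i.val + 1 = j.val).symm, rfl, rfl⟩

theorem reflTransGen_colourClass_inr {a b : Fin n} (hab : a ≤ b) :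
    Relation.ReflTransGen (colourClass (Farc n) (pathColouring n) 1) (Sum.inr a) (Sum.inr b) :=
  (le_iff_reflTransGen_covBy.1 hab).lift Sum.inr fun i j hij =>
    ⟨(by simpa using hij : i.val + 1 = j.val).symm, rfl, rfl⟩

theorem exists_le_farc_inl_inr_farc_inr_inl (i : Fin n) :
    ∃ a b, a ≤ b ∧ Farc n (Sum.inl i) (Sum.inr a) ∧ Farc n (Sum.inr b) (Sum.inl i) := by
  by_cases hi : i.val + 1 < n
  · exact ⟨i, ⟨i + 1, hi⟩, Fin.le_def.2 (Nat.le_succ _), .inl rfl, .inl rfl⟩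
  · have h_last : i.val = n - 1 := by omega
    exact ⟨⟨0, i.pos⟩, ⟨n - 2, by omega⟩, Nat.zero_le _, .inr ⟨h_last, rfl⟩,
      .inr (.inr ⟨rfl, h_last⟩)⟩

theorem exists_le_farc_inr_inl_farc_inl_inr (hn : 2 ≤ n) (i : Fin n) :
    ∃ a b, a ≤ b ∧ Farc n (Sum.inr i) (Sum.inl a) ∧ Farc n (Sum.inl b) (Sum.inr i) := by
  rcases Nat.eq_zero_or_pos i.val with h_first | hi
  · exact ⟨⟨1, hn⟩, ⟨n - 1, by omega⟩, Fin.le_def.2 (Nat.le_sub_one_of_lt hn),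
      .inr (.inl ⟨h_first, rfl⟩), .inr ⟨rfl, h_first⟩⟩
  · exact ⟨⟨i - 1, by omega⟩, i, Fin.le_def.2 (Nat.sub_le _ _),
      .inl (Nat.succ_pred_eq_of_pos hi).symm, .inl rfl⟩

theorem frozenDicolouring_pathColouring (hn : 2 ≤ n) :
    FrozenDicolouring (Farc n) 2 (pathColouring n) := by
  refine ⟨isDicolouring_pathColouring n, ?_⟩
  rintro (i | i) c hc
  · obtain rfl : c = 1 := Fin.eq_one_of_ne_zero c hc
    obtain ⟨a, b, hab, h_out, h_in⟩ := exists_le_farc_inl_inr_farc_inr_inl i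
    exact not_isDicolouring_update rfl h_out (reflTransGen_colourClass_inr hab) h_in
  · obtain rfl : c = 0 := by
      by_contra h
      exact hc (Fin.eq_one_of_ne_zero c h)
    obtain ⟨a, b, hab, h_out, h_in⟩ := exists_le_farc_inr_inl_farc_inl_inr hn i
    exact not_isDicolouring_update rfl h_out (reflTransGen_colourClass_inl hab) h_in

end Farc

/-- For `n ≥ 3`, `F⃗_n` has exactly `4n` arcs (so `|A| = 2|V|` and
`Mad(F⃗_n) = 4`, i.e. every nonempty induced subdigraph `H` satisfies
`|A(H)| ≤ 2 |V(H)|` with equality for `F⃗_n` itself), and the `2`-dicolouring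
giving colour `1` to every `u_i` and colour `2` to every `v_i` is frozen;
in particular `F⃗_n` is `2`-freezable. -/
theorem Fn_freezable (n : ℕ) (hn : 3 ≤ n) :
    (arcSet (Farc n)).ncard = 4 * n ∧
    (∀ S : Set (Fin n ⊕ Fin n), S.Nonempty →
      (arcSetOn (Farc n) S).ncard ≤ 2 * S.ncard) ∧
    FrozenDicolouring (Farc n) 2
      (Sum.elim (fun _ => (0 : Fin 2)) (fun _ => (1 : Fin 2))) := by
  refine ⟨?_, fun S _ => ?_, frozenDicolouring_pathColouring (by omega)⟩
  · calc (arcSet (Farc n)).ncard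
        = 2 * Nat.card (Fin n ⊕ Fin n) := ncard_arcSet_eq_mul_card (ncard_chargedArcs_farc hn)
      _ = 4 * n := by rw [Nat.card_sum, Nat.card_fin]; ring
  · exact ncard_arcSetOn_le_mul_ncard (fun p _ => arcOwner_eq_or p)
      (fun v => (ncard_chargedArcs_farc hn v).le) S
end

section
/- For every k ≥ 2 and every n ≥ 3, the oriented graph F⃗_n^k described below is k-freezable and has exactly k·|V(F⃗_n^k)| + k(k−2) arcs, where |V(F⃗_n^k)| = kn; moreover, the dicolouring assigning colour j to all vertices of P_j for each j ∈ [k] is a frozen k-dicolouring. Here F⃗_n^k is obtained from k disjoint directed paths P_1,…,P_k, with P_j = (v^j_1,…,v^j_n), by adding for each pair 1 ≤ j < ℓ ≤ k the arcs {v^j_i v^ℓ_i : i ∈ [n]} ∪ {v^ℓ_{i+1} v^j_i : i ∈ [n−1]} ∪ {v^ℓ_1 v^j_2, v^j_n v^ℓ_1, v^ℓ_{n−1} v^j_n}, so that the subdigraph induced by V(P_j) ∪ V(P_ℓ) is isomorphic to F⃗_n. -/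
/-- The oriented graph `F⃗_n^k` on `Fin k × Fin n`, where `(j, i)` is the vertex
`v^{j+1}_{i+1}` (`0`-indexed): `k` disjoint directed paths `P_1, …, P_k`, and
for each pair `j < ℓ` the arcs `v^j_i v^ℓ_i` (`i ∈ [n]`), `v^ℓ_{i+1} v^j_i`
(`i ∈ [n-1]`), `v^ℓ_1 v^j_2`, `v^j_n v^ℓ_1` and `v^ℓ_{n-1} v^j_n`, so that the
subdigraph induced by `V(P_j) ∪ V(P_ℓ)` is isomorphic to `F⃗_n`. -/
def FKarc (k n : ℕ) (a b : Fin k × Fin n) : Prop :=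
  (a.1 = b.1 ∧ b.2.val = a.2.val + 1) ∨
  (a.1.val < b.1.val ∧ a.2 = b.2) ∨
  (b.1.val < a.1.val ∧
    (a.2.val = b.2.val + 1 ∨ (a.2.val = 0 ∧ b.2.val = 1) ∨
      (a.2.val = n - 2 ∧ b.2.val = n - 1))) ∨
  (a.1.val < b.1.val ∧ a.2.val = n - 1 ∧ b.2.val = 0)

/-!
Every arc inside `P_j` increases the path index, so the paths induce acyclic colour classes.
Recolouring `v^j_i` with `l ≠ j` closes a cycle through a subpath of `P_l`: for `j < l` the subpath
is `v^l_i v^l_{i+1}`, or `v^l_1 … v^l_{n-1}` when `i = n`; for `l < j` it is `v^l_{i-1} v^l_i`, or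
`v^l_2 … v^l_n` when `i = 1`.

Each path contributes `n - 1` arcs. For `j < l` there are `n + 1` arcs from `P_j` to `P_l`, namely
the `n` arcs `v^j_i v^l_i` and one exceptional arc, and `n + 1` arcs back, namely the `n - 1` arcs
`v^l_{i+1} v^j_i` and two exceptional ones. This gives `k (n - 1) + k (k - 1) (n + 1)` in total.
-/

open Relation

section Dicolouring

variable {V : Type} {k : ℕ} {D : V → V → Prop}

theorem relAcyclic_of_forall_lt {β : Type*} [Preorder β] {r : V → V → Prop} (f : V → β)
    (hf : ∀ u v, r u v → f u < f v) : RelAcyclic r := fun v hv =>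
  lt_irrefl (f v) <| by simpa only [transGen_eq_self] using TransGen.lift f hf v v hv

theorem not_isDicolouring_update_of_cycle [DecidableEq V] {α : V → Fin k} {c : Fin k} {v a b : V}
    (hva : D v a) (ha : α a = c)
    (hab : ReflTransGen (fun u w => D u w ∧ α u = c ∧ α w = c) a b) (hbv : D b v) :
    ¬ IsDicolouring D k (Function.update α v c) := by
  intro hα
  have hb : α b = c := by
    obtain rfl | ⟨_, _, hstep⟩ := hab.cases_tail
    exacts [ha, hstep.2.2]
  have hupdate : ∀ u, α u = c → Function.update α v c u = c := fun u hu => by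
    rw [Function.update_apply, hu, ite_self]
  have hv : Function.update α v c v = c := Function.update_self v c α
  have hpath : ReflTransGen (fun u w => D u w ∧ Function.update α v c u = c ∧
      Function.update α v c w = c) a b :=
    ReflTransGen.mono (fun u w h => ⟨h.1, hupdate u h.2.1, hupdate w h.2.2⟩) a b hab
  exact hα c v <| .head' ⟨hva, hv, hupdate a ha⟩ <| hpath.tail ⟨hbv, hupdate b hb, hv⟩

end Dicolouring

section ArcsBetween

variable {J I : Type}

/-- The arcs of a digraph on `J × I` from the column `{j} × I` to the column `{l} × I`,
recorded by the `I`-coordinates of their ends. -/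
def arcsBetween (D : J × I → J × I → Prop) (j l : J) : Set (I × I) :=
  {p | D (j, p.1) (l, p.2)}

/-- Sorts the arcs of a digraph on `J × I` by the columns of their ends. -/
def arcSetEquivSigma (D : J × I → J × I → Prop) :
    arcSet D ≃ Σ q : J × J, arcsBetween D q.1 q.2 where
  toFun e := ⟨(e.1.1.1, e.1.2.1), (e.1.1.2, e.1.2.2), e.2⟩
  invFun e := ⟨((e.1.1, e.2.1.1), (e.1.2, e.2.1.2)), e.2.2⟩

theorem ncard_arcSet_eq_sum [Fintype J] [Finite I] (D : J × I → J × I → Prop) :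
    (arcSet D).ncard = ∑ q : J × J, (arcsBetween D q.1 q.2).ncard := by
  simp only [← Nat.card_coe_set_eq, Nat.card_congr (arcSetEquivSigma D), Nat.card_sigma]

theorem ncard_arcSet_of_uniform [Fintype J] [Finite I] {D : J × I → J × I → Prop} {s t : ℕ}
    (hs : ∀ j, (arcsBetween D j j).ncard = s)
    (ht : ∀ j l, j ≠ l → (arcsBetween D j l).ncard = t) :
    (arcSet D).ncard =
      Fintype.card J * s + (Fintype.card J * Fintype.card J - Fintype.card J) * t := by
  classical
  have hdiag : ∀ q ∈ (Finset.univ : Finset J).diag, (arcsBetween D q.1 q.2).ncard = s := by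
    rintro ⟨j, l⟩ hq
    obtain rfl : j = l := (Finset.mem_diag.mp hq).2
    exact hs j
  have hoff : ∀ q ∈ (Finset.univ : Finset J).offDiag, (arcsBetween D q.1 q.2).ncard = t :=
    fun q hq => ht q.1 q.2 (Finset.mem_offDiag.mp hq).2.2
  rw [ncard_arcSet_eq_sum, ← Finset.univ_product_univ, ← Finset.diag_union_offDiag,
    Finset.sum_union (Finset.disjoint_diag_offDiag _), Finset.sum_const_nat hdiag,
    Finset.sum_const_nat hoff, Finset.diag_card, Finset.offDiag_card, Finset.card_univ]

end ArcsBetween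

theorem fin_castSucc_covBy_succ {m : ℕ} (i : Fin m) : i.castSucc ⋖ i.succ := by
  rw [Fin.covBy_iff, Nat.covBy_iff_add_one_eq, Fin.val_castSucc, Fin.val_succ]

theorem ncard_setOf_fin_covBy (n : ℕ) : {p : Fin n × Fin n | p.1 ⋖ p.2}.ncard = n - 1 := by
  cases n with
  | zero => simp [Set.eq_empty_of_isEmpty]
  | succ m =>
    have hrange : {p : Fin (m + 1) × Fin (m + 1) | p.1 ⋖ p.2} =
        Set.range fun i : Fin m => (i.castSucc, i.succ) := by
      ext ⟨a, b⟩
      constructor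
      · intro (hab : a ⋖ b)
        obtain ⟨i, rfl⟩ := Fin.exists_castSucc_eq.mpr (Fin.ne_last_of_lt hab.lt)
        exact ⟨i, Prod.ext rfl ((fin_castSucc_covBy_succ i).unique_right hab)⟩
      · rintro ⟨i, hi⟩
        cases hi
        exact fin_castSucc_covBy_succ i
    have hinj : Function.Injective fun i : Fin m => (i.castSucc, i.succ) := fun i j hij =>
      Fin.succ_injective m (congrArg Prod.snd hij)
    rw [hrange, Set.ncard_range_of_injective hinj, Nat.card_fin, Nat.add_sub_cancel]

namespace FKarc

variable {k m n : ℕ} {j l : Fin k}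

theorem self_iff {a b : Fin n} : FKarc k n (j, a) (j, b) ↔ a ⋖ b := by
  simp only [FKarc, lt_irrefl, true_and, false_and, or_false, Fin.covBy_iff,
    Nat.covBy_iff_add_one_eq, eq_comm (a := b.val)]

theorem iff_of_lt (hjl : j < l) {a b : Fin (m + 1)} :
    FKarc k (m + 1) (j, a) (l, b) ↔ a = b ∨ a = Fin.last m ∧ b = 0 := by
  have hval : j.val < l.val := hjl
  simp only [FKarc, Fin.ext_iff, Fin.val_last, Fin.val_zero]
  lia

theorem iff_of_gt (hlj : l < j) {a b : Fin (m + 2)} :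
    FKarc k (m + 2) (j, a) (l, b) ↔
      b ⋖ a ∨ a = 0 ∧ b = 1 ∨ a = (Fin.last m).castSucc ∧ b = Fin.last (m + 1) := by
  have hval : l.val < j.val := hlj
  simp only [FKarc, Fin.ext_iff, Fin.covBy_iff, Nat.covBy_iff_add_one_eq, Fin.val_castSucc,
    Fin.val_last, Fin.val_zero, Fin.val_one]
  lia

theorem ncard_arcsBetween_self (k n : ℕ) (j : Fin k) :
    (arcsBetween (FKarc k n) j j).ncard = n - 1 := by
  simp only [arcsBetween, self_iff, ncard_setOf_fin_covBy]

theorem ncard_arcsBetween_of_lt (hn : 2 ≤ n) (hjl : j < l) :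
    (arcsBetween (FKarc k n) j l).ncard = n + 1 := by
  obtain ⟨m, rfl⟩ := Nat.exists_eq_add_of_le' hn
  have hinsert : arcsBetween (FKarc k (m + 2)) j l =
      insert (Fin.last (m + 1), 0) (Set.range fun i : Fin (m + 2) => (i, i)) := by
    ext ⟨a, b⟩
    simp [arcsBetween, iff_of_lt hjl, or_comm]
  have hdiag : (Set.range fun i : Fin (m + 2) => (i, i)).ncard = m + 2 := by
    rw [Set.ncard_range_of_injective fun i j hij => congrArg Prod.fst hij, Nat.card_fin]
  rw [hinsert, Set.ncard_insert_of_notMem, hdiag]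
  simp

theorem ncard_arcsBetween_of_gt (hn : 3 ≤ n) (hlj : l < j) :
    (arcsBetween (FKarc k n) j l).ncard = n + 1 := by
  obtain ⟨m, rfl⟩ := Nat.exists_eq_add_of_le' hn
  let descents : Set (Fin (m + 3) × Fin (m + 3)) := Prod.swap '' {p | p.1 ⋖ p.2}
  have hmem : ∀ a b, (a, b) ∈ descents ↔ b.val + 1 = a.val := fun a b => by
    simp only [descents, Set.image_swap_eq_preimage_swap, Set.mem_preimage, Set.mem_ofPred_eq,
      Prod.fst_swap, Prod.snd_swap, Fin.covBy_iff, Nat.covBy_iff_add_one_eq]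
  have hinsert : arcsBetween (FKarc k (m + 3)) j l =
      insert (0, 1) (insert ((Fin.last (m + 1)).castSucc, Fin.last (m + 2)) descents) := by
    ext ⟨a, b⟩
    simp only [arcsBetween, Set.mem_ofPred_eq, iff_of_gt hlj, Set.mem_insert_iff, Prod.mk.injEq,
      hmem, Fin.covBy_iff, Nat.covBy_iff_add_one_eq]
    tauto
  have hlast : ((Fin.last (m + 1)).castSucc, Fin.last (m + 2)) ∉ descents := by
    simp [hmem]
  have hfirst :
      (0, 1) ∉ insert ((Fin.last (m + 1)).castSucc, Fin.last (m + 2)) descents := by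
    simp [hmem, Fin.ext_iff]
  have hdescents : descents.ncard = m + 2 := by
    rw [Set.ncard_image_of_injective _ Prod.swap_injective, ncard_setOf_fin_covBy]
    rfl
  rw [hinsert, Set.ncard_insert_of_notMem hfirst, Set.ncard_insert_of_notMem hlast, hdescents]

theorem ncard_arcSet (k : ℕ) (hn : 3 ≤ n) :
    (arcSet (FKarc k n)).ncard = k * (n - 1) + (k * k - k) * (n + 1) := by
  have hdistinct : ∀ j l : Fin k, j ≠ l → (arcsBetween (FKarc k n) j l).ncard = n + 1 :=
    fun j l hjl => hjl.lt_or_gt.elim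
      (ncard_arcsBetween_of_lt (Nat.le_of_succ_le hn)) (ncard_arcsBetween_of_gt hn)
  rw [ncard_arcSet_of_uniform (ncard_arcsBetween_self k n) hdistinct, Fintype.card_fin]

theorem isDicolouring_fst (k n : ℕ) : IsDicolouring (FKarc k n) k Prod.fst := fun c =>
  relAcyclic_of_forall_lt Prod.snd <| by
    rintro ⟨_, a⟩ ⟨_, b⟩ ⟨h, rfl, rfl⟩
    exact (self_iff.mp h).lt

theorem reflTransGen_column (j : Fin k) {a b : Fin n} (hab : a ≤ b) :
    ReflTransGen (fun u w => FKarc k n u w ∧ u.1 = j ∧ w.1 = j) (j, a) (j, b) :=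
  ReflTransGen.lift (Prod.mk j) (fun _ _ h => ⟨self_iff.mpr h, rfl, rfl⟩) a b
    (le_iff_reflTransGen_covBy.mp hab)

theorem exists_le_arc_out_arc_in_of_lt (hn : 2 ≤ n) (hjl : j < l) (i : Fin n) :
    ∃ a b : Fin n, a ≤ b ∧ FKarc k n (j, i) (l, a) ∧ FKarc k n (l, b) (j, i) := by
  obtain ⟨m, rfl⟩ := Nat.exists_eq_add_of_le' hn
  cases i using Fin.lastCases with
  | last =>
    exact ⟨0, (Fin.last m).castSucc, Fin.zero_le _, (iff_of_lt hjl).mpr (.inr ⟨rfl, rfl⟩),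
      (iff_of_gt hjl).mpr (.inr (.inr ⟨rfl, rfl⟩))⟩
  | cast i =>
    exact ⟨i.castSucc, i.succ, i.castSucc_lt_succ.le, (iff_of_lt hjl).mpr (.inl rfl),
      (iff_of_gt hjl).mpr (.inl (fin_castSucc_covBy_succ i))⟩

theorem exists_le_arc_out_arc_in_of_gt (hn : 2 ≤ n) (hlj : l < j) (i : Fin n) :
    ∃ a b : Fin n, a ≤ b ∧ FKarc k n (j, i) (l, a) ∧ FKarc k n (l, b) (j, i) := by
  obtain ⟨m, rfl⟩ := Nat.exists_eq_add_of_le' hn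
  cases i using Fin.cases with
  | zero =>
    exact ⟨1, Fin.last (m + 1), Fin.le_last _, (iff_of_gt hlj).mpr (.inr (.inl ⟨rfl, rfl⟩)),
      (iff_of_lt hlj).mpr (.inr ⟨rfl, rfl⟩)⟩
  | succ i =>
    exact ⟨i.castSucc, i.succ, i.castSucc_lt_succ.le,
      (iff_of_gt hlj).mpr (.inl (fin_castSucc_covBy_succ i)), (iff_of_lt hlj).mpr (.inl rfl)⟩

theorem frozenDicolouring_fst (k : ℕ) (hn : 2 ≤ n) :
    FrozenDicolouring (FKarc k n) k Prod.fst := by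
  refine ⟨isDicolouring_fst k n, ?_⟩
  rintro ⟨j, i⟩ c (hcj : c ≠ j)
  obtain ⟨a, b, hab, hout, hin⟩ :
      ∃ a b : Fin n, a ≤ b ∧ FKarc k n (j, i) (c, a) ∧ FKarc k n (c, b) (j, i) := by
    rcases hcj.lt_or_gt with hlt | hgt
    · exact exists_le_arc_out_arc_in_of_gt hn hlt i
    · exact exists_le_arc_out_arc_in_of_lt hn hgt i
  exact not_isDicolouring_update_of_cycle hout rfl (reflTransGen_column c hab) hin

end FKarc

/-- For `k ≥ 2` and `n ≥ 3`, the oriented graph `F⃗_n^k` has exactly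
`k |V| + k (k - 2)` arcs, where `|V| = k n`, and the `k`-dicolouring assigning
colour `j` to all vertices of `P_j` is frozen; in particular `F⃗_n^k` is
`k`-freezable. -/
theorem Fnk_freezable (k n : ℕ) (hk : 2 ≤ k) (hn : 3 ≤ n) :
    (arcSet (FKarc k n)).ncard = k * (k * n) + k * (k - 2) ∧
    FrozenDicolouring (FKarc k n) k (fun v => v.1) := by
  refine ⟨?_, FKarc.frozenDicolouring_fst k (Nat.le_of_succ_le hn)⟩
  rw [FKarc.ncard_arcSet k hn]
  zify [hk, show 1 ≤ n by lia, Nat.le_mul_self k]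
  ring
end

section
/- Let G⃗ be an oriented graph and let s be a vertex of G⃗ that is a source (d⁻(s) = 0) or a sink (d⁺(s) = 0). If G⃗ − s is 2-mixing, then G⃗ is 2-mixing. -/
/-!
A vertex `s` lying on no directed cycle, in particular a source or a sink, lies on no monochromatic
one, so its colour can be chosen freely: the dicolourings of `D` are exactly the extensions
`(Equiv.funSplitAt s (Fin k)).symm (c, γ)` of a dicolouring `γ` of `D - s` by an arbitrary colour
`c` at `s`. Hence one can first recolour `D - s` with the colour of `s` kept fixed, and then
recolour `s`.
-/

theorem transGen_subtype_of_forall_between {V : Type*} {r : V → V → Prop} {p : V → Prop}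
    {a b : V} (hab : Relation.TransGen r a b)
    (hp : ∀ w, Relation.ReflTransGen r a w → Relation.ReflTransGen r w b → p w) :
    Relation.TransGen (fun x y : Subtype p => r x y)
      ⟨a, hp a .refl hab.to_reflTransGen⟩ ⟨b, hp b hab.to_reflTransGen .refl⟩ := by
  induction hab with
  | single hab => exact .single hab
  | tail _ hbc ih => exact (ih fun w haw hwb => hp w haw (hwb.tail hbc)).tail hbc

theorem RelAcyclic.onFun {V W : Type} {r : V → V → Prop} (hr : RelAcyclic r) (f : W → V) :
    RelAcyclic (fun x y => r (f x) (f y)) :=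
  fun v hv => hr (f v) (Relation.TransGen.lift f (fun _ _ h => h) _ _ hv)

theorem relAcyclic_iff_subtype {V : Type} {r : V → V → Prop} {p : V → Prop}
    (hp : ∀ v, ¬ p v → ¬ Relation.TransGen r v v) :
    RelAcyclic r ↔ RelAcyclic (fun x y : Subtype p => r x y) := by
  refine ⟨fun hr => hr.onFun Subtype.val, fun hr v hv => ?_⟩
  refine hr _ (transGen_subtype_of_forall_between hv fun w hvw hwv => ?_)
  have cycle_at_w : Relation.TransGen r w w := (hv.trans_right hwv).trans_left hvw
  exact of_not_not fun hpw => hp w hpw cycle_at_w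

theorem isDicolouring_iff_subtype {V : Type} {D : V → V → Prop} {k : ℕ} {p : V → Prop}
    (hp : ∀ v, ¬ p v → ¬ Relation.TransGen D v v) (α : V → Fin k) :
    IsDicolouring D k α ↔ IsDicolouring (fun x y : Subtype p => D x y) k (fun x => α x) :=
  forall_congr' fun _ => relAcyclic_iff_subtype fun v hv hcycle =>
    hp v hv (Relation.TransGen.mono (fun _ _ h => h.1) _ _ hcycle)

section VertexExtension

variable {V : Type} [DecidableEq V] {k : ℕ} {s : V}

theorem isDicolouring_funSplitAt_symm_iff {D : V → V → Prop} (hs : ¬ Relation.TransGen D s s)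
    (c : Fin k) (γ : {v // v ≠ s} → Fin k) :
    IsDicolouring D k ((Equiv.funSplitAt s (Fin k)).symm (c, γ)) ↔
      IsDicolouring (fun a b : {v // v ≠ s} => D a b) k γ := by
  have restrict_extension : (fun v : {v // v ≠ s} =>
      (Equiv.funSplitAt s (Fin k)).symm (c, γ) v) = γ :=
    congrArg Prod.snd ((Equiv.funSplitAt s (Fin k)).apply_symm_apply (c, γ))
  rw [isDicolouring_iff_subtype (p := (· ≠ s)) (by simpa using hs), restrict_extension]

theorem RecolAdj.funSplitAt_symm {γ δ : {v // v ≠ s} → Fin k} (hγδ : RecolAdj γ δ) (c : Fin k) :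
    RecolAdj ((Equiv.funSplitAt s (Fin k)).symm (c, γ))
      ((Equiv.funSplitAt s (Fin k)).symm (c, δ)) := by
  obtain ⟨v, hv, heq⟩ := hγδ
  refine ⟨v, by simpa [v.2] using hv, fun w hwv => ?_⟩
  by_cases hw : w = s
  · simp [hw]
  · simpa [hw] using heq ⟨w, hw⟩ (by simpa [Subtype.ext_iff] using hwv)

theorem recolAdj_funSplitAt_symm_of_ne {c d : Fin k} (hcd : c ≠ d) (γ : {v // v ≠ s} → Fin k) :
    RecolAdj ((Equiv.funSplitAt s (Fin k)).symm (c, γ))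
      ((Equiv.funSplitAt s (Fin k)).symm (d, γ)) :=
  ⟨s, by simpa using hcd, fun w hw => by simp [hw]⟩

end VertexExtension

theorem not_transGen_self_of_inDegOn_or_outDegOn_eq_zero {V : Type} [Finite V]
    {D : V → V → Prop} {s : V}
    (hs : inDegOn D Set.univ s = 0 ∨ outDegOn D Set.univ s = 0) :
    ¬ Relation.TransGen D s s := by
  intro hcycle
  rcases hs with hin | hout
  · obtain ⟨w, _, hws⟩ := Relation.TransGen.tail'_iff.1 hcycle
    exact Set.ncard_ne_zero_of_mem (show w ∈ {u ∈ Set.univ | D u s} from ⟨trivial, hws⟩)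
      (Set.toFinite _) hin
  · obtain ⟨w, hsw, _⟩ := Relation.TransGen.head'_iff.1 hcycle
    exact Set.ncard_ne_zero_of_mem (show w ∈ {u ∈ Set.univ | D s u} from ⟨trivial, hsw⟩)
      (Set.toFinite _) hout

theorem source_or_sink_mixing_general {V : Type} {D : V → V → Prop} {k : ℕ} {s : V}
    (hs : ¬ Relation.TransGen D s s)
    (hmix : Mixing (fun a b : {v : V // v ≠ s} => D a.1 b.1) k) :
    Mixing D k := by
  classical
  intro α β hα hβ
  obtain ⟨⟨c, γ⟩, rfl⟩ := (Equiv.funSplitAt s (Fin k)).symm.surjective α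
  obtain ⟨⟨d, δ⟩, rfl⟩ := (Equiv.funSplitAt s (Fin k)).symm.surjective β
  have extension_iff := isDicolouring_funSplitAt_symm_iff (k := k) hs
  have hγ := (extension_iff c γ).1 hα
  have hδ := (extension_iff d δ).1 hβ
  have recolour_rest := Relation.ReflTransGen.lift
    (p := RecolStep D k) (fun ε => (Equiv.funSplitAt s (Fin k)).symm (c, ε))
    (fun ε ζ ⟨hε, hζ, hεζ⟩ =>
      ⟨(extension_iff c ε).2 hε, (extension_iff c ζ).2 hζ, hεζ.funSplitAt_symm c⟩)
    _ _ (hmix γ δ hγ hδ)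
  obtain rfl | hcd := eq_or_ne c d
  · exact recolour_rest
  · exact recolour_rest.tail
      ⟨(extension_iff c δ).2 hδ, hβ, recolAdj_funSplitAt_symm_of_ne hcd δ⟩

/-- If `s` is a source or a sink of an oriented graph `G⃗` and `G⃗ - s` is
`2`-mixing, then `G⃗` is `2`-mixing. -/
theorem source_or_sink_mixing {V : Type} [Fintype V] (D : V → V → Prop)
    (horiented : Oriented D) (s : V)
    (hs : inDegOn D Set.univ s = 0 ∨ outDegOn D Set.univ s = 0)
    (hmix : Mixing (fun a b : {v : V // v ≠ s} => D a.1 b.1) 2) :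
    Mixing D 2 :=
  source_or_sink_mixing_general (not_transGen_self_of_inDegOn_or_outDegOn_eq_zero hs) hmix
end

section
/- Let G⃗ be an oriented graph and let u be a vertex of G⃗ with d⁺(u) = d⁻(u) = 1. If G⃗ − u is 2-mixing, then G⃗ is 2-mixing. -/
/-!
Suppose that `u` lies on no digon and no loop, and that its in- and out-degree are less than the
number of colours. Consider a recolouring of a vertex `v` in `D - u`. As `u` lies on no digon, `v`
is not in `N⁺(u)` or not in `N⁻(u)`; say it is not in `N⁺(u)`. Some colour is absent from `N⁺(u)`,
both before and after the recolouring of `v`. Give this colour to `u` first: `u` is then on no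
monochromatic cycle, so `v` can be recoloured in `D` as well. Hence every redicolouring sequence of
`D - u` lifts to `D`, and a last recolouring of `u` corrects its colour.
-/

open Function Relation

theorem exists_notMem_image_of_encard_lt {α β : Type*} (f : α → β) {s : Set α}
    (hs : s.encard < ENat.card β) : ∃ y, y ∉ f '' s := by
  rw [← Set.ne_univ_iff_exists_notMem]
  intro himage
  rw [← Set.encard_univ, ← himage] at hs
  exact hs.not_ge (Set.encard_image_le f s)

theorem encard_lt_two_of_ncard_eq_one {α : Type*} {s : Set α} (hs : s.ncard = 1) :
    s.encard < 2 := by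
  rw [Set.encard_eq_one.2 (Set.ncard_eq_one.1 hs)]
  exact Nat.one_lt_ofNat

theorem restrict_update_of_not {V β : Type*} [DecidableEq V] {p : V → Prop} {u : V} (hu : ¬ p u)
    (f : V → β) (y : β) : Subtype.restrict p (update f u y) = Subtype.restrict p f :=
  update_comp_eq_of_forall_ne f y fun v hv => hu (hv ▸ v.2)

theorem restrict_update_val {V β : Type*} [DecidableEq V] {p : V → Prop} (f : V → β)
    (v : Subtype p) (y : β) :
    Subtype.restrict p (update f v y) = update (Subtype.restrict p f) v y :=
  update_comp_eq_of_injective f Subtype.val_injective v y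

theorem exists_transGen_subrel {V : Type*} {r : V → V → Prop} {p : V → Prop}
    (hp : ∀ ⦃x y⦄, r x y → p x) {x y : V} (hxy : TransGen r x y) (hy : p y) :
    ∃ hx : p x, TransGen (Subrel r p) ⟨x, hx⟩ ⟨y, hy⟩ := by
  induction hxy using TransGen.head_induction_on with
  | single hxy => exact ⟨hp hxy, .single hxy⟩
  | head hxz _ ih =>
    obtain ⟨hz, hzy⟩ := ih
    have hstep : Subrel r p ⟨_, hp hxz⟩ ⟨_, hz⟩ := hxz
    exact ⟨hp hxz, .head hstep hzy⟩

section Acyclic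

variable {V : Type} {r : V → V → Prop}

theorem RelAcyclic.of_subrel {p : V → Prop} (h : RelAcyclic (Subrel r p))
    (hp : ∀ ⦃x y⦄, r x y → p x) : RelAcyclic r := by
  intro v hv
  obtain ⟨w, hvw, -⟩ := TransGen.head'_iff.1 hv
  obtain ⟨_, hcycle⟩ := exists_transGen_subrel hp hv (hp hvw)
  exact h _ hcycle

theorem RelAcyclic.subrel (h : RelAcyclic r) (p : V → Prop) : RelAcyclic (Subrel r p) :=
  fun v hv => h v (hv.lift Subtype.val fun _ _ => id)

theorem RelAcyclic.swap (h : RelAcyclic r) : RelAcyclic (swap r) :=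
  fun v hv => h v (transGen_swap.1 hv)

end Acyclic

section Recolouring

variable {V : Type} {D : V → V → Prop} {k : ℕ} {α β : V → Fin k}

theorem IsDicolouring.restrict (h : IsDicolouring D k α) (p : V → Prop) :
    IsDicolouring (Subrel D p) k (Subtype.restrict p α) :=
  fun c => (h c).subrel p

theorem IsDicolouring.of_restrict {p : V → Prop}
    (h : IsDicolouring (Subrel D p) k (Subtype.restrict p α))
    (hp : ∀ ⦃x y⦄, D x y → α x = α y → p x) : IsDicolouring D k α :=
  fun c => (h c).of_subrel fun _ _ ⟨hxy, hx, hy⟩ => hp hxy (hx.trans hy.symm)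

theorem IsDicolouring.swap (h : IsDicolouring D k α) : IsDicolouring (swap D) k α := by
  intro c v hv
  exact (h c).swap v (TransGen.mono (fun _ _ ⟨hxy, hx, hy⟩ => ⟨hxy, hy, hx⟩) _ _ hv)

theorem recolStep_swap : RecolStep (swap D) k = RecolStep D k := by
  have hswap (γ : V → Fin k) : IsDicolouring (swap D) k γ ↔ IsDicolouring D k γ :=
    ⟨IsDicolouring.swap, IsDicolouring.swap⟩
  ext α β
  simp only [RecolStep, hswap]

theorem RecolAdj.exists_eq_update [DecidableEq V] (h : RecolAdj α β) :
    ∃ v c, β = update α v c := by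
  obtain ⟨v, -, hv⟩ := h
  exact ⟨v, β v, eq_update_iff.2 ⟨rfl, fun w hw => (hv w hw).symm⟩⟩

theorem IsDicolouring.reflTransGen_update [DecidableEq V] {v : V} {c : Fin k}
    (hα : IsDicolouring D k α) (hupdate : IsDicolouring D k (update α v c)) :
    ReflTransGen (RecolStep D k) α (update α v c) := by
  obtain rfl | hc := eq_or_ne (α v) c
  · rw [update_eq_self]
  · exact .single ⟨hα, hupdate, v, by rwa [update_self], fun w hw => (update_of_ne hw _ _).symm⟩

end Recolouring

section DeleteVertex

variable {V : Type} {D : V → V → Prop} {k : ℕ} {u : V} {α : V → Fin k}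

theorem IsDicolouring.of_forall_out_ne
    (h : IsDicolouring (Subrel D (· ≠ u)) k (Subtype.restrict (· ≠ u) α))
    (hu : ∀ w, D u w → α w ≠ α u) : IsDicolouring D k α := by
  refine h.of_restrict ?_
  rintro _ w huw hmono rfl
  exact hu w huw hmono.symm

theorem IsDicolouring.exists_lift_update [DecidableEq V] (hα : IsDicolouring D k α)
    (hloop : ¬ D u u) (hout : {w | D u w}.encard < k) {v : {v // v ≠ u}} (hv : ¬ D u v) {c : Fin k}
    (hupdate : IsDicolouring (Subrel D (· ≠ u)) k (update (Subtype.restrict (· ≠ u) α) v c)) :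
    ∃ α', IsDicolouring D k α' ∧
      Subtype.restrict (· ≠ u) α' = update (Subtype.restrict (· ≠ u) α) v c ∧
      ReflTransGen (RecolStep D k) α α' := by
  obtain ⟨y, hy⟩ := exists_notMem_image_of_encard_lt α (s := {w | D u w}) (by simpa using hout)
  set α₁ := update α u y
  set α₂ := update α₁ v c
  have hα₁_out : ∀ w, D u w → α₁ w ≠ y := by
    intro w huw hw
    have hwu : w ≠ u := by rintro rfl; exact hloop huw
    exact hy ⟨w, huw, (update_of_ne hwu y α).symm.trans hw⟩
  have hα₂_out : ∀ w, D u w → α₂ w ≠ y := by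
    intro w huw
    have hwv : w ≠ v := by rintro rfl; exact hv huw
    exact (update_of_ne hwv c α₁).trans_ne (hα₁_out w huw)
  have hα₁_u : α₁ u = y := update_self u y α
  have hα₂_u : α₂ u = y := (update_of_ne v.2.symm c α₁).trans hα₁_u
  have hα₁_restrict : Subtype.restrict (· ≠ u) α₁ = Subtype.restrict (· ≠ u) α :=
    restrict_update_of_not (fun hu => hu rfl) α y
  have hα₂_restrict :
      Subtype.restrict (· ≠ u) α₂ = update (Subtype.restrict (· ≠ u) α) v c := by
    rw [restrict_update_val, hα₁_restrict]
  have hα₁ : IsDicolouring D k α₁ :=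
    .of_forall_out_ne (hα₁_restrict ▸ hα.restrict _) (hα₁_u.symm ▸ hα₁_out)
  have hα₂ : IsDicolouring D k α₂ :=
    .of_forall_out_ne (hα₂_restrict ▸ hupdate) (hα₂_u.symm ▸ hα₂_out)
  exact ⟨α₂, hα₂, hα₂_restrict, (hα.reflTransGen_update hα₁).trans (hα₁.reflTransGen_update hα₂)⟩

theorem IsDicolouring.exists_lift_recolStep (hα : IsDicolouring D k α)
    (hdigon : ∀ v, D u v → ¬ D v u) (hout : {w | D u w}.encard < k)
    (hin : {w | D w u}.encard < k) {β : {v // v ≠ u} → Fin k}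
    (hstep : RecolStep (Subrel D (· ≠ u)) k (Subtype.restrict (· ≠ u) α) β) :
    ∃ α', IsDicolouring D k α' ∧ Subtype.restrict (· ≠ u) α' = β ∧
      ReflTransGen (RecolStep D k) α α' := by
  classical
  obtain ⟨-, hβ, hadj⟩ := hstep
  obtain ⟨v, c, rfl⟩ := hadj.exists_eq_update
  have hloop : ¬ D u u := fun h => hdigon u h h
  by_cases huv : D u v
  · obtain ⟨α', hα', hrestrict, hpath⟩ :=
      hα.swap.exists_lift_update (D := Function.swap D) hloop hin (hdigon v huv) hβ.swap
    exact ⟨α', hα'.swap, hrestrict, recolStep_swap (D := D) ▸ hpath⟩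
  · exact hα.exists_lift_update hloop hout huv hβ

theorem IsDicolouring.exists_lift_reflTransGen (hα : IsDicolouring D k α)
    (hdigon : ∀ v, D u v → ¬ D v u) (hout : {w | D u w}.encard < k)
    (hin : {w | D w u}.encard < k) {β : {v // v ≠ u} → Fin k}
    (hpath : ReflTransGen (RecolStep (Subrel D (· ≠ u)) k) (Subtype.restrict (· ≠ u) α) β) :
    ∃ α', IsDicolouring D k α' ∧ Subtype.restrict (· ≠ u) α' = β ∧
      ReflTransGen (RecolStep D k) α α' := by
  induction hpath with
  | refl => exact ⟨α, hα, rfl, .refl⟩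
  | tail _ hstep ih =>
    obtain ⟨α₁, hα₁, rfl, hαα₁⟩ := ih
    obtain ⟨α₂, hα₂, hrestrict, hα₁α₂⟩ := hα₁.exists_lift_recolStep hdigon hout hin hstep
    exact ⟨α₂, hα₂, hrestrict, hαα₁.trans hα₁α₂⟩

theorem IsDicolouring.reflTransGen_of_restrict_eq {β : V → Fin k} (hα : IsDicolouring D k α)
    (hβ : IsDicolouring D k β)
    (h : Subtype.restrict (· ≠ u) α = Subtype.restrict (· ≠ u) β) :
    ReflTransGen (RecolStep D k) α β := by
  classical
  have hupdate : β = update α u (β u) :=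
    eq_update_iff.2 ⟨rfl, fun w hw => (congrFun h ⟨w, hw⟩).symm⟩
  rw [hupdate] at hβ ⊢
  exact hα.reflTransGen_update hβ

end DeleteVertex

theorem degree_two_vertex_mixing_general {V : Type} {D : V → V → Prop} {k : ℕ} {u : V}
    (hdigon : ∀ v, D u v → ¬ D v u) (hout : {w | D u w}.encard < k)
    (hin : {w | D w u}.encard < k) (hmix : Mixing (Subrel D (· ≠ u)) k) : Mixing D k := by
  intro α β hα hβ
  have hpath := hmix _ _ (hα.restrict (· ≠ u)) (hβ.restrict (· ≠ u))
  obtain ⟨β', hβ', hrestrict, hαβ'⟩ := hα.exists_lift_reflTransGen hdigon hout hin hpath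
  exact hαβ'.trans (hβ'.reflTransGen_of_restrict_eq hβ hrestrict)

/-- If `u` is a vertex of an oriented graph `G⃗` with `d⁺(u) = d⁻(u) = 1` and
`G⃗ - u` is `2`-mixing, then `G⃗` is `2`-mixing. -/
theorem degree_two_vertex_mixing {V : Type} [Fintype V] (D : V → V → Prop)
    (horiented : Oriented D) (u : V)
    (hout : outDegOn D Set.univ u = 1) (hin : inDegOn D Set.univ u = 1)
    (hmix : Mixing (fun a b : {v : V // v ≠ u} => D a.1 b.1) 2) :
    Mixing D 2 :=
  degree_two_vertex_mixing_general (horiented u)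
    (encard_lt_two_of_ncard_eq_one (by simpa only [outDegOn, Set.mem_univ, true_and] using hout))
    (encard_lt_two_of_ncard_eq_one (by simpa only [inDegOn, Set.mem_univ, true_and] using hin))
    hmix
end
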